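/- Let ω = (ω_n, …, ω_1, ω_0) be a general basis of the polynomials of degree ≤ n over a field F, let F(x) and G(x) have degrees n and m with n > m, leading coefficient a_n of F, and assume the roots α_1, …, α_n ∈ F̄ of F are pairwise distinct. Then for every 0 ≤ k ≤ m, the k-th subresultant polynomial satisfies S_k = (−1)^{(n−k)(n−k−1)/2} · a_n^{m−n} · det([B_{ω,k}; X_{ω,k}]), where [B_{ω,k}; X_{ω,k}] is the n×n matrix over F[x] obtained by stacking the (n−k)×n matrix B_{ω,k} (the Bézout matrix B_ω of F and G in ω with its last k rows deleted) on top of X_{ω,k}. -/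

import Mathlib

open Polynomial Matrix BigOperators

noncomputable section

/-- A *general basis* of the polynomials of degree ≤ `n` over `K`:
`ω i` is monic of degree `i` for every `i ≤ n`. -/
def IsGeneralBasis {K : Type*} [Field K] (n : ℕ) (ω : ℕ → Polynomial K) : Prop :=
  ∀ i ≤ n, (ω i).Monic ∧ (ω i).natDegree = i

/-- `B` is the Bézout matrix of `P` and `Q` in the basis `ω`:
`P(x)Q(y) − P(y)Q(x) = (x − y) · ω̄(x)ᵀ B ω̄(y)` in `K[x,y] = (K[y])[x]`,
where the outer variable is `x` and the inner one is `y`, and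
`ω̄ = (ω_{n−1}, …, ω_1, ω_0)ᵀ`. -/
def BezoutRelation {K : Type*} [Field K] (n : ℕ) (ω : ℕ → Polynomial K)
    (P Q : Polynomial K) (B : Matrix (Fin n) (Fin n) K) : Prop :=
  P.map Polynomial.C * Polynomial.C Q - Polynomial.C P * Q.map Polynomial.C =
    (Polynomial.X - Polynomial.C Polynomial.X) *
      ∑ i : Fin n, ∑ j : Fin n,
        (ω (n - 1 - (i : ℕ))).map Polynomial.C * Polynomial.C (ω (n - 1 - (j : ℕ))) *
          Polynomial.C (Polynomial.C (B i j))

/-- The `(n−k) × n` submatrix of an `n × n` matrix obtained by deleting the last `k` rows. -/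
def topRows {K : Type*} (n k : ℕ) (B : Matrix (Fin n) (Fin n) K) :
    Matrix (Fin (n - k)) (Fin n) K :=
  Matrix.of fun i j => B ⟨(i : ℕ), by have := i.isLt; omega⟩ j

/-- The `k × n` matrix `X_{ω,k}`: rows `1,…,k` carry `−I_k` in (1-based) columns
`n−k, …, n−1`, and the last column of row `i` is `ω_{k+1−i}`. -/
def Xmat {K : Type*} [Field K] (n k : ℕ) (ω : ℕ → Polynomial K) :
    Matrix (Fin k) (Fin n) (Polynomial K) :=
  Matrix.of fun i j =>
    if (j : ℕ) = n - k - 1 + (i : ℕ) then -1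
    else if (j : ℕ) = n - 1 then ω (k - (i : ℕ))
    else 0

/-- Stacking an `(n−k) × n` scalar matrix on top of a `k × n` polynomial matrix. -/
def stackMat {K : Type*} [Field K] {n k : ℕ}
    (M : Matrix (Fin (n - k)) (Fin n) K) (Y : Matrix (Fin k) (Fin n) (Polynomial K)) :
    Matrix (Fin n) (Fin n) (Polynomial K) :=
  Matrix.of fun i j =>
    if h : (i : ℕ) < n - k then Polynomial.C (M ⟨(i : ℕ), h⟩ j)
    else Y ⟨(i : ℕ) - (n - k), by have := i.isLt; omega⟩ j

/-- The Vandermonde-type matrix with `(i,j)` entry `α_j^{n−i}` (1-based `i`). -/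
def vmat {L : Type*} [Field L] (n : ℕ) (α : Fin n → L) : Matrix (Fin n) (Fin n) L :=
  Matrix.of fun i j => α j ^ (n - 1 - (i : ℕ))

/-- The `(n+1) × (n+1)` matrix whose determinant is the numerator `D` in the
root expression of the `k`-th subresultant polynomial (power basis):
rows `1,…,n−k` have entries `α_j^{n−k−i} G(α_j)` (last column `0`),
rows `n−k+1,…,n+1` have entries `α_j^{k+1−i}` (last column `x^{k+1−i}`). -/
def subresNum {K L : Type*} [Field K] [Field L] [Algebra K L] (n k : ℕ)
    (α : Fin n → L) (G : Polynomial K) :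
    Matrix (Fin (n + 1)) (Fin (n + 1)) (Polynomial L) :=
  Matrix.of fun i j =>
    if hj : (j : ℕ) < n then
      if (i : ℕ) < n - k then
        Polynomial.C (α ⟨(j : ℕ), hj⟩ ^ (n - k - 1 - (i : ℕ)) *
          Polynomial.aeval (α ⟨(j : ℕ), hj⟩) G)
      else Polynomial.C (α ⟨(j : ℕ), hj⟩ ^ (n - (i : ℕ)))
    else
      if (i : ℕ) < n - k then 0 else Polynomial.X ^ (n - (i : ℕ))

/-- The `k`-th subresultant polynomial of `P` and `G` in terms of the roots `α` of `P`:
`S_k = (−1)^k a^{m−k} · D / V`. -/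
def subresPoly {K L : Type*} [Field K] [Field L] [Algebra K L] (n m k : ℕ)
    (a : K) (α : Fin n → L) (G : Polynomial K) : Polynomial L :=
  Polynomial.C ((-1) ^ k * algebraMap K L a ^ (m - k) / (vmat n α).det) *
    (subresNum n k α G).det

/-! For a root `β` of `P`, setting `y = β` in the Bézout relation shows that `B · (ω_{n-1-j}(β))_j`
is the `ω`-coordinate vector of `Q(β) · P / (X - β)`. By Horner's rule the leading `n - k` power
coefficients of that quotient are polynomials in `β` of degrees `0, …, n - k - 1`, all with leading
coefficient `lc(P)`. Hence multiplying `[B_{ω,k}; X_{ω,k}]` on the right by the generalized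
Vandermonde matrix `(ω_{n-1-i}(α_j))`, which has the same determinant as the ordinary one, yields,
up to (anti)triangular row operations on each of the two blocks, the numerator matrix of the
subresultant with its last column cleared. -/

section Determinants

lemma sign_fin_revPerm (n : ℕ) :
    Equiv.Perm.sign (Fin.revPerm : Equiv.Perm (Fin n)) = (-1) ^ (n * (n - 1) / 2) := by
  rw [Equiv.Perm.sign_eq_prod_prod_Iio, ← Finset.sum_range_id, Finset.sum_range,
    ← Finset.prod_pow_eq_pow_sum]
  refine Finset.prod_congr rfl fun j _ => ?_
  rw [Finset.prod_congr rfl fun i hi => if_neg ?_, Finset.prod_const, Fin.card_Iio]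
  simpa only [Fin.revPerm_apply, Fin.rev_lt_rev, not_lt] using (Finset.mem_Iio.mp hi).le

variable {R : Type*} [CommRing R]

lemma det_of_antitriangular {n : ℕ} (A : Matrix (Fin n) (Fin n) R)
    (hA : ∀ i j, j < i.rev → A i j = 0) :
    A.det = (-1) ^ (n * (n - 1) / 2) * ∏ i, A i i.rev := by
  have hlower : (A.submatrix id Fin.revPerm).IsLowerTriangular := fun i j (hij : i < j) =>
    hA i j.rev (Fin.rev_lt_rev.mpr hij)
  have hdet := det_permute' Fin.revPerm A
  rw [det_of_isLowerTriangular _ hlower, sign_fin_revPerm] at hdet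
  have hsign : ((-1 : R) ^ (n * (n - 1) / 2)) * (-1) ^ (n * (n - 1) / 2) = 1 := by
    rw [← mul_pow, neg_one_mul, neg_neg, one_pow]
  calc A.det = (-1) ^ (n * (n - 1) / 2) * ((-1) ^ (n * (n - 1) / 2) * A.det) := by
        rw [← mul_assoc, hsign, one_mul]
    _ = (-1) ^ (n * (n - 1) / 2) * ∏ i, A i i.rev := by
        simpa using congrArg ((-1) ^ (n * (n - 1) / 2) * ·) hdet.symm

/-- The determinant of the matrix with row blocks `M₁` and `M₂`, whose rows are put in the order
given by `e`. -/
def detFromRows {m₁ m₂ n : Type*} [Fintype n] [DecidableEq n] (e : m₁ ⊕ m₂ ≃ n)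
    (M₁ : Matrix m₁ n R) (M₂ : Matrix m₂ n R) : R :=
  ((fromRows M₁ M₂).submatrix e.symm id).det

variable {m₁ m₂ n : Type*} [Fintype n] [DecidableEq n] (e : m₁ ⊕ m₂ ≃ n)
  (M₁ : Matrix m₁ n R) (M₂ : Matrix m₂ n R)

lemma detFromRows_mul_right (W : Matrix n n R) :
    detFromRows e (M₁ * W) (M₂ * W) = detFromRows e M₁ M₂ * W.det := by
  rw [detFromRows, ← fromRows_mul, ← submatrix_mul_equiv _ _ _ (Equiv.refl n), det_mul]
  rfl

lemma detFromRows_mul_left [Fintype m₁] [DecidableEq m₁] [Fintype m₂] [DecidableEq m₂]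
    (S : Matrix m₁ m₁ R) (T : Matrix m₂ m₂ R) :
    detFromRows e (S * M₁) (T * M₂) = S.det * T.det * detFromRows e M₁ M₂ := by
  have hblocks : fromRows (S * M₁) (T * M₂) = fromBlocks S 0 0 T * fromRows M₁ M₂ := by
    rw [fromBlocks_mul_fromRows, Matrix.zero_mul, Matrix.zero_mul, add_zero, zero_add]
  rw [detFromRows, hblocks, ← submatrix_mul_equiv _ _ _ e.symm, det_mul,
    det_submatrix_equiv_self, det_fromBlocks_zero₂₁, detFromRows]

lemma detFromRows_neg₂ [Fintype m₂] :
    detFromRows e M₁ (-M₂) = (-1) ^ Fintype.card m₂ * detFromRows e M₁ M₂ := by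
  classical
  have : Finite m₁ := Finite.of_injective _ (e.injective.comp Sum.inl_injective)
  cases nonempty_fintype m₁
  simpa only [Matrix.one_mul, Matrix.neg_mul, det_neg, det_one, one_mul, mul_one] using
    detFromRows_mul_left e M₁ M₂ 1 (-1)

end Determinants

section GeneralBasis

variable {L : Type*} [Field L] {n : ℕ} {ω : ℕ → L[X]}

lemma IsGeneralBasis.map {K : Type*} [Field K] {ω : ℕ → K[X]} (hω : IsGeneralBasis n ω)
    (φ : K →+* L) : IsGeneralBasis n fun i => (ω i).map φ :=
  fun i hi => ⟨(hω i hi).1.map φ, by rw [natDegree_map, (hω i hi).2]⟩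

lemma isGeneralBasis_X_pow (n : ℕ) : IsGeneralBasis n fun i => (X : L[X]) ^ i :=
  fun i _ => ⟨monic_X_pow i, natDegree_X_pow i⟩

lemma IsGeneralBasis.zero_eq_one (hω : IsGeneralBasis n ω) : ω 0 = 1 :=
  (hω 0 n.zero_le).1.natDegree_eq_zero.mp (hω 0 n.zero_le).2

lemma IsGeneralBasis.coeff_self (hω : IsGeneralBasis n ω) {i : ℕ} (hi : i ≤ n) :
    (ω i).coeff i = 1 := by
  simpa only [(hω i hi).2] using (hω i hi).1.coeff_natDegree

lemma IsGeneralBasis.coeff_eq_zero (hω : IsGeneralBasis n ω) {i d : ℕ} (hi : i ≤ n) (hd : i < d) :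
    (ω i).coeff d = 0 :=
  coeff_eq_zero_of_natDegree_lt (by rwa [(hω i hi).2])

/-- The power-basis coordinates of `ω_d, …, ω_{d-r+1}` with respect to `X^d, …, X^{d-r+1}`. -/
def coeffMatrix (r d : ℕ) (ω : ℕ → L[X]) : Matrix (Fin r) (Fin r) L :=
  of fun i s => (ω (d - i)).coeff (d - s)

lemma IsGeneralBasis.det_coeffMatrix (hω : IsGeneralBasis n ω) {r d : ℕ} (hd : d ≤ n)
    (hr : r ≤ d + 1) : (coeffMatrix r d ω).det = 1 := by
  rw [det_of_isUpperTriangular]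
  · exact Finset.prod_eq_one fun i _ => hω.coeff_self (by omega)
  · intro i j (hji : j < i)
    exact hω.coeff_eq_zero (by omega) (by omega)

/-- The generalized Vandermonde matrix of the basis `ω_{n-1}, …, ω_0` at the points `α`. -/
def basisVandermonde (n : ℕ) (ω : ℕ → L[X]) (α : Fin n → L) : Matrix (Fin n) (Fin n) L :=
  of fun i j => (ω (n - 1 - i)).eval (α j)

lemma IsGeneralBasis.det_basisVandermonde (hω : IsGeneralBasis n ω) (α : Fin n → L) :
    (basisVandermonde n ω α).det =
      Equiv.Perm.sign (Fin.revPerm : Equiv.Perm (Fin n)) * (vandermonde α).det := by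
  have hperm : basisVandermonde n ω α =
      ((of fun i j : Fin n => (ω j).eval (α i))ᵀ).submatrix Fin.revPerm id := by
    ext i j
    simp only [basisVandermonde, of_apply, submatrix_apply, transpose_apply, id,
      Fin.revPerm_apply, Fin.val_rev, Nat.sub_sub, Nat.add_comm 1]
  rw [hperm, det_permute, det_transpose, det_eval_matrixOfPolynomials_eq_det_vandermonde α
    (fun i => ω i) (fun i => (hω i i.isLt.le).2) fun i => (hω i i.isLt.le).1]

lemma basisVandermonde_X_pow (α : Fin n → L) :
    basisVandermonde n (fun i => X ^ i) α = vmat n α := by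
  ext i j
  simp only [basisVandermonde, vmat, of_apply, eval_pow, eval_X]

lemma IsGeneralBasis.det_basisVandermonde_eq_det_vmat (hω : IsGeneralBasis n ω) (α : Fin n → L) :
    (basisVandermonde n ω α).det = (vmat n α).det := by
  rw [hω.det_basisVandermonde, ← basisVandermonde_X_pow,
    (isGeneralBasis_X_pow n).det_basisVandermonde]

lemma det_vmat_ne_zero {α : Fin n → L} (hα : Function.Injective α) : (vmat n α).det ≠ 0 := by
  rw [← basisVandermonde_X_pow, (isGeneralBasis_X_pow n).det_basisVandermonde]
  exact mul_ne_zero ((Units.isUnit _).map (Int.castRingHom L)).ne_zero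
    (det_vandermonde_ne_zero_iff.mpr hα)

end GeneralBasis

section TopRows

variable {L : Type*} [Field L] {n k : ℕ}

lemma coeff_divByMonic_X_sub_C_eq_sum_range {R : Type*} [CommRing R] {P : R[X]} {d N : ℕ}
    (hP : P.natDegree ≤ d + N) (β : R) :
    (P /ₘ (X - C β)).coeff d = ∑ l ∈ Finset.range N, P.coeff (d + 1 + l) * β ^ l := by
  have hsubset : Finset.Icc (d + 1) P.natDegree ⊆ Finset.Ico (d + 1) (d + 1 + N) := fun l => by
    simp only [Finset.mem_Icc, Finset.mem_Ico]
    omega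
  rw [coeff_divByMonic_X_sub_C, Finset.sum_subset hsubset, Finset.sum_Ico_eq_sum_range]
  · simp only [Nat.add_sub_cancel_left, mul_comm]
  · intro l hl hl'
    rw [coeff_eq_zero_of_natDegree_lt, mul_zero]
    simp only [Finset.mem_Icc, Finset.mem_Ico] at hl hl'
    omega

lemma BezoutRelation.map {K : Type*} [Field K] {ω : ℕ → K[X]} {P Q : K[X]}
    {B : Matrix (Fin n) (Fin n) K} (hB : BezoutRelation n ω P Q B) (φ : K →+* L) :
    BezoutRelation n (fun i => (ω i).map φ) (P.map φ) (Q.map φ) (B.map φ) := by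
  have hcomp : (mapRingHom φ).comp C = C.comp φ := RingHom.ext fun x => map_C φ
  have h := congrArg (Polynomial.map (mapRingHom φ)) hB
  simpa only [BezoutRelation, Polynomial.map_sub, Polynomial.map_mul, Polynomial.map_sum,
    Polynomial.map_map, map_C, map_X, coe_mapRingHom, hcomp, map_apply] using h

variable {ω : ℕ → L[X]} {P Q : L[X]} {B : Matrix (Fin n) (Fin n) L}

lemma BezoutRelation.sum_mul_C_eq_divByMonic (hB : BezoutRelation n ω P Q B) {β : L}
    (hβ : P.IsRoot β) :
    ∑ i : Fin n, ω (n - 1 - i) * C ((B *ᵥ fun j => (ω (n - 1 - j)).eval β) i) =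
      C (Q.eval β) * (P /ₘ (X - C β)) := by
  have hcomp : (evalRingHom β).comp C = RingHom.id L := RingHom.ext fun x => eval_C
  have h := congrArg (Polynomial.map (evalRingHom β)) hB
  simp only [Polynomial.map_sub, Polynomial.map_mul, Polynomial.map_sum, Polynomial.map_map, map_C,
    map_X, hcomp, Polynomial.map_id, coe_evalRingHom, eval_X, eval_C, hβ.eq_zero, C_0, zero_mul,
    sub_zero] at h
  apply mul_left_cancel₀ (X_sub_C_ne_zero β)
  rw [mul_left_comm, mul_divByMonic_eq_iff_isRoot.mpr hβ, mul_comm (C _), h]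
  simp only [mulVec, dotProduct, map_sum, C_mul, Finset.mul_sum]
  exact Finset.sum_congr rfl fun i _ => Finset.sum_congr rfl fun j _ => by ring

/-- The rows `1, …, n` of an `n`-rowed matrix as its first `n - k` rows followed by its last `k`
rows. -/
def rowEquiv (h : k ≤ n) : Fin (n - k) ⊕ Fin k ≃ Fin n :=
  finSumFinEquiv.trans (finCongr (Nat.sub_add_cancel h))

@[simp] lemma val_rowEquiv_inl (h : k ≤ n) (i : Fin (n - k)) :
    (rowEquiv h (Sum.inl i) : ℕ) = i := rfl

@[simp] lemma val_rowEquiv_inr (h : k ≤ n) (i : Fin k) :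
    (rowEquiv h (Sum.inr i) : ℕ) = n - k + i := rfl

/-- The top block of the subresultant numerator matrix: the polynomials
`X^{p-1} Q, …, X Q, Q` at the points `α`. -/
def rootRows (p : ℕ) (α : Fin n → L) (Q : L[X]) : Matrix (Fin p) (Fin n) L :=
  of fun i j => α j ^ (i.rev : ℕ) * Q.eval (α j)

/-- The coefficients of `X^{p-1}, …, X, 1` in the `p` leading power coefficients of
`P / (X - β)`, which are polynomials in the root `β` of `P`. -/
def leadingHankel (p : ℕ) (P : L[X]) : Matrix (Fin p) (Fin p) L :=
  of fun i j => P.coeff (P.natDegree - i + j.rev)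

lemma det_leadingHankel {p : ℕ} (hp : p ≤ P.natDegree + 1) :
    (leadingHankel p P).det = (-1) ^ (p * (p - 1) / 2) * P.leadingCoeff ^ p := by
  rw [det_of_antitriangular]
  · have hanti (i : Fin p) : leadingHankel p P i i.rev = P.leadingCoeff := by
      rw [leadingHankel, of_apply, Fin.rev_rev, Nat.sub_add_cancel (by omega), leadingCoeff]
    simp only [hanti, Finset.prod_const, Finset.card_univ, Fintype.card_fin]
  · intro i j hij
    rw [Fin.lt_rev_iff] at hij
    refine coeff_eq_zero_of_natDegree_lt ?_
    have : (i : ℕ) < j.rev := hij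
    omega

lemma BezoutRelation.coeffMatrix_transpose_mul_topRows (hB : BezoutRelation n ω P Q B)
    (hkn : k ≤ n) (hω : IsGeneralBasis n ω) (hP : P.natDegree = n) {α : Fin n → L}
    (hα : ∀ j, P.IsRoot (α j)) :
    (coeffMatrix (n - k) (n - 1) ω)ᵀ * (topRows n k B * basisVandermonde n ω α) =
      leadingHankel (n - k) P * rootRows (n - k) α Q := by
  ext i j
  let c : Fin n → L := B *ᵥ fun l => (ω (n - 1 - l)).eval (α j)
  have hcoeff : (∑ s : Fin n, ω (n - 1 - s) * C (c s)).coeff (n - 1 - i) =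
      ((coeffMatrix (n - k) (n - 1) ω)ᵀ * (topRows n k B * basisVandermonde n ω α)) i j := by
    have hbottom (s : Fin k) : (ω (n - 1 - rowEquiv hkn (Sum.inr s))).coeff (n - 1 - i) = 0 :=
      hω.coeff_eq_zero (by omega) (by rw [val_rowEquiv_inr]; omega)
    simp only [finsetSum_coeff, coeff_mul_C]
    rw [← (rowEquiv hkn).sum_comp, Fintype.sum_sum_type]
    simp only [hbottom, zero_mul, Finset.sum_const_zero, add_zero]
    rfl
  rw [← hcoeff, hB.sum_mul_C_eq_divByMonic (hα j), coeff_C_mul,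
    coeff_divByMonic_X_sub_C_eq_sum_range (N := n - k) (by omega), ← Finset.sum_range_reflect,
    Finset.sum_range, Finset.mul_sum, mul_apply]
  refine Finset.sum_congr rfl fun s _ => ?_
  simp only [leadingHankel, rootRows, of_apply, Fin.val_rev, hP]
  rw [show n - 1 - (i : ℕ) + 1 = n - i by omega,
    show n - k - 1 - (s : ℕ) = n - k - (s + 1) by omega]
  ring

end TopRows

section BottomRows

variable {L : Type*} [Field L] {n k : ℕ} {ω : ℕ → L[X]}

/-- The differences `ω_i(X) - ω_i(α_j)` for `i = k, …, 1`: the bottom rows of the subresultant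
numerator matrix in the basis `ω`, up to sign, after its last column has been cleared. -/
def basisDiff (k : ℕ) (ω : ℕ → L[X]) (α : Fin n → L) : Matrix (Fin k) (Fin n) L[X] :=
  of fun i j => ω (k - i) - C ((ω (k - i)).eval (α j))

lemma Xmat_mul_basisVandermonde (hkn : k < n) (hω : ω 0 = 1) (α : Fin n → L) :
    Xmat n k ω * (basisVandermonde n ω α).map C = basisDiff k ω α := by
  ext1 i j
  let pivot : Fin n := ⟨n - k - 1 + i, by omega⟩
  let last : Fin n := ⟨n - 1, by omega⟩
  have hrow (s : Fin n) : Xmat n k ω i s =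
      (if s = pivot then -1 else 0) + if s = last then ω (k - i) else 0 := by
    simp only [Xmat, of_apply, Fin.ext_iff, pivot, last]
    split_ifs <;> first | omega | simp
  have hpivot : n - 1 - (n - k - 1 + i) = k - i := by omega
  simp only [mul_apply, hrow, add_mul, ite_mul, zero_mul, Finset.sum_add_distrib,
    Finset.sum_ite_eq', Finset.mem_univ, if_true, map_apply, basisVandermonde, of_apply, pivot,
    last, hpivot, Nat.sub_self, hω, eval_one, C_1, basisDiff]
  ring

lemma sub_C_eval_eq_sum_range {R : Type*} [CommRing R] {f : R[X]} (hf : f.natDegree ≤ k) (β : R) :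
    f - C (f.eval β) =
      ∑ l ∈ Finset.range k, C (f.coeff (l + 1)) * (X ^ (l + 1) - C (β ^ (l + 1))) := by
  have hf' : f.natDegree < k + 1 := Nat.lt_succ_of_le hf
  calc f - C (f.eval β)
      = ∑ l ∈ Finset.range (k + 1), C (f.coeff l) * (X ^ l - C (β ^ l)) := by
        simp only [mul_sub, Finset.sum_sub_distrib, ← C_mul, ← map_sum,
          ← as_sum_range_C_mul_X_pow' f hf', ← eval_eq_sum_range' hf']
    _ = _ := by
        rw [Finset.sum_range_succ', pow_zero, pow_zero, C_1, sub_self, mul_zero, add_zero]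

lemma basisDiff_eq_coeffMatrix_mul (hω : ∀ i ≤ k, (ω i).natDegree ≤ k) (α : Fin n → L) :
    basisDiff k ω α = (coeffMatrix k k ω).map C * basisDiff k (fun i => X ^ i) α := by
  ext1 i j
  rw [basisDiff, of_apply, sub_C_eval_eq_sum_range (hω _ (Nat.sub_le _ _)),
    ← Finset.sum_range_reflect, Finset.sum_range, mul_apply]
  refine Finset.sum_congr rfl fun s _ => ?_
  rw [show k - 1 - (s : ℕ) + 1 = k - s by omega]
  simp only [coeffMatrix, basisDiff, map_apply, of_apply, eval_pow, eval_X]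

end BottomRows

section Subresultant

variable {L : Type*} [Field L] {n k : ℕ}

lemma det_stackMat (hkn : k ≤ n) (M : Matrix (Fin (n - k)) (Fin n) L)
    (Y : Matrix (Fin k) (Fin n) L[X]) :
    (stackMat M Y).det = detFromRows (rowEquiv hkn) (M.map C) Y := by
  rw [detFromRows]
  congr 1
  ext1 i j
  obtain ⟨i | i, rfl⟩ := (rowEquiv hkn).surjective i <;>
    simp [stackMat]

lemma det_subresNum (hkn : k ≤ n) (α : Fin n → L) (Q : L[X]) :
    (subresNum n k α Q).det = (-1) ^ k *
      detFromRows (rowEquiv hkn) ((rootRows (n - k) α Q).map C)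
        (basisDiff k (fun i => X ^ i) α) := by
  set R := (rootRows (n - k) α Q).map C
  let powerRows : Matrix (Fin k) (Fin n) L[X] := of fun i j => C (α j ^ (k - (i : ℕ)))
  let powers : Matrix (Fin k) (Fin 1) L[X] := of fun i _ => X ^ (k - (i : ℕ))
  let ones : Matrix (Fin 1) (Fin n) L[X] := of fun _ _ => 1
  have hblocks : (subresNum n k α Q).submatrix finSumFinEquiv finSumFinEquiv =
      fromBlocks ((fromRows R powerRows).submatrix (rowEquiv hkn).symm id)
        ((fromRows 0 powers).submatrix (rowEquiv hkn).symm id) ones 1 := by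
    ext1 i j
    rcases i with i | i
    · have hrev (i : Fin (n - k)) : n - k - 1 - (i : ℕ) = i.rev := by
        rw [Fin.val_rev, Nat.sub_sub, Nat.add_comm 1]
      have hexp (i : Fin k) : n - (n - k + (i : ℕ)) = k - i := by omega
      obtain ⟨i | i, rfl⟩ := (rowEquiv hkn).surjective i <;> rcases j with j | j <;>
        simp [subresNum, R, rootRows, powerRows, powers, hrev, hexp]
    · rcases j with j | j <;> simp [subresNum, ones, Fin.fin_one_eq_zero]
  have hschur : fromRows R powerRows - fromRows 0 powers * ones =
      fromRows R (-basisDiff k (fun i => X ^ i) α) := by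
    ext1 i j
    rcases i with i | i <;> simp [mul_apply, powerRows, powers, ones, basisDiff]
  calc (subresNum n k α Q).det
      = ((fromRows R powerRows - fromRows 0 powers * ones).submatrix
          (rowEquiv hkn).symm id).det := by
        rw [← det_submatrix_equiv_self finSumFinEquiv, hblocks, det_fromBlocks_one₂₂]
        rfl
    _ = detFromRows (rowEquiv hkn) R (-basisDiff k (fun i => X ^ i) α) := by
        rw [hschur, detFromRows]
    _ = _ := by rw [detFromRows_neg₂, Fintype.card_fin]

lemma det_stackMat_mul_det_vmat (hkn : k < n) {ω : ℕ → L[X]} (hω : IsGeneralBasis n ω)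
    {P Q : L[X]} (hP : P.natDegree = n) {α : Fin n → L} (hα : ∀ j, P.IsRoot (α j))
    {B : Matrix (Fin n) (Fin n) L} (hB : BezoutRelation n ω P Q B) :
    (stackMat (topRows n k B) (Xmat n k ω)).det * C (vmat n α).det =
      C ((-1) ^ ((n - k) * (n - k - 1) / 2) * P.leadingCoeff ^ (n - k) * (-1) ^ k) *
        (subresNum n k α Q).det := by
  set e := rowEquiv hkn.le
  set W := basisVandermonde n ω α
  set U := coeffMatrix (n - k) (n - 1) ω
  set H := leadingHankel (n - k) P
  set T := coeffMatrix k k ω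
  set powerDiff := basisDiff k (fun i => X ^ i) α
  have hU : U.det = 1 := hω.det_coeffMatrix (by omega) (by omega)
  have hT : T.det = 1 := hω.det_coeffMatrix (by omega) (by omega)
  have hH : H.det = (-1) ^ ((n - k) * (n - k - 1) / 2) * P.leadingCoeff ^ (n - k) :=
    det_leadingHankel (by omega)
  calc (stackMat (topRows n k B) (Xmat n k ω)).det * C (vmat n α).det
      = detFromRows e ((topRows n k B).map C * W.map C) (Xmat n k ω * W.map C) := by
        rw [detFromRows_mul_right, det_stackMat hkn.le, ← hω.det_basisVandermonde_eq_det_vmat,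
          RingHom.map_det, RingHom.mapMatrix_apply]
    _ = detFromRows e ((Uᵀ).map C * (topRows n k B * W).map C)
          ((1 : Matrix (Fin k) (Fin k) L[X]) * basisDiff k ω α) := by
        rw [detFromRows_mul_left, ← RingHom.mapMatrix_apply C Uᵀ, ← RingHom.map_det, det_transpose,
          hU, C_1, det_one, one_mul, one_mul, Matrix.map_mul,
          Xmat_mul_basisVandermonde hkn hω.zero_eq_one]
    _ = detFromRows e (H.map C * (rootRows (n - k) α Q).map C) (T.map C * powerDiff) := by
        rw [← Matrix.map_mul, hB.coeffMatrix_transpose_mul_topRows hkn.le hω hP hα, Matrix.map_mul,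
          Matrix.one_mul, basisDiff_eq_coeffMatrix_mul fun i hi => (hω i (by omega)).2.trans_le hi]
    _ = C H.det * detFromRows e ((rootRows (n - k) α Q).map C) powerDiff := by
        rw [detFromRows_mul_left, ← RingHom.mapMatrix_apply, ← RingHom.mapMatrix_apply,
          ← RingHom.map_det, ← RingHom.map_det, hT, C_1, mul_one]
    _ = _ := by
        have hsign : (-1 : L[X]) ^ k * (-1) ^ k = 1 := by
          rw [← mul_pow, neg_one_mul, neg_neg, one_pow]
        rw [det_subresNum hkn.le, hH, C_mul (b := (-1) ^ k), C_pow (n := k), C_neg, C_1, mul_assoc,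
          ← mul_assoc ((-1) ^ k), hsign, one_mul]

lemma subresNum_map_algebraMap {K : Type*} [Field K] [Algebra K L] (α : Fin n → L) (Q : K[X]) :
    subresNum n k α (Q.map (algebraMap K L)) = subresNum n k α Q := by
  ext1 i j
  simp only [subresNum, of_apply, aeval_map_algebraMap]

lemma stackMat_map {K : Type*} [Field K] (φ : K →+* L) (ω : ℕ → K[X])
    (B : Matrix (Fin n) (Fin n) K) :
    (stackMat (topRows n k B) (Xmat n k ω)).map (Polynomial.map φ) =
      stackMat (topRows n k (B.map φ)) (Xmat n k fun i => (ω i).map φ) := by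
  ext1 i j
  simp only [stackMat, topRows, Xmat, map_apply, of_apply]
  split_ifs <;> simp

theorem subresultant_as_single_determinant_general {K : Type*} [Field K] [Algebra K L]
    (hkn : k < n) {ω : ℕ → K[X]} (hω : IsGeneralBasis n ω) {P Q : K[X]} (hP : P.natDegree = n)
    (hkQ : k ≤ Q.natDegree) {α : Fin n → L} (hroot : ∀ j, aeval (α j) P = 0)
    (hα : Function.Injective α) {B : Matrix (Fin n) (Fin n) K} (hB : BezoutRelation n ω P Q B) :
    subresPoly n Q.natDegree k P.leadingCoeff α Q =
      C ((-1 : L) ^ ((n - k) * (n - k - 1) / 2) *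
          algebraMap K L P.leadingCoeff ^ ((Q.natDegree : ℤ) - (n : ℤ))) *
        ((stackMat (topRows n k B) (Xmat n k ω)).det).map (algebraMap K L) := by
  set φ := algebraMap K L
  have hV : (vmat n α).det ≠ 0 := det_vmat_ne_zero hα
  have hlc : φ P.leadingCoeff ≠ 0 := by
    rw [_root_.map_ne_zero, leadingCoeff_ne_zero]
    rintro rfl
    rw [natDegree_zero] at hP
    omega
  have hkey := det_stackMat_mul_det_vmat hkn (hω.map φ) (by rw [natDegree_map, hP])
    (fun j => (eval_map_algebraMap P (α j)).trans (hroot j)) (hB.map φ)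
  rw [← stackMat_map, ← coe_mapRingHom, ← RingHom.mapMatrix_apply, ← RingHom.map_det,
    coe_mapRingHom, subresNum_map_algebraMap, leadingCoeff_map] at hkey
  have hpow : φ P.leadingCoeff ^ (Q.natDegree - k) =
      φ P.leadingCoeff ^ ((Q.natDegree : ℤ) - n) * φ P.leadingCoeff ^ (n - k) := by
    rw [← zpow_natCast, ← zpow_natCast, ← zpow_add₀ hlc]
    congr 1
    omega
  have hsign : (-1 : L) ^ ((n - k) * (n - k - 1) / 2) *
      (-1) ^ ((n - k) * (n - k - 1) / 2) = 1 := by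
    rw [← mul_pow, neg_one_mul, neg_neg, one_pow]
  apply mul_right_cancel₀ (C_ne_zero.mpr hV)
  rw [subresPoly, mul_assoc (C _) (Polynomial.map φ _), hkey, mul_right_comm, ← C_mul, ← mul_assoc,
    ← C_mul, div_mul_cancel₀ _ hV, hpow]
  congr 2
  linear_combination (-(-1) ^ k * φ P.leadingCoeff ^ ((Q.natDegree : ℤ) - n) *
    φ P.leadingCoeff ^ (n - k)) * hsign

end Subresultant

lemma leadingCoeff_eq_of_map_eq_C_mul_prod {K L ι : Type*} [Field K] [Field L] [Algebra K L]
    [Fintype ι] {P : K[X]} {a : K} {α : ι → L}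
    (h : P.map (algebraMap K L) = C (algebraMap K L a) * ∏ j, (X - C (α j))) :
    P.leadingCoeff = a := by
  apply (algebraMap K L).injective
  rw [← leadingCoeff_map, h, leadingCoeff_mul, leadingCoeff_C, leadingCoeff_prod]
  simp only [leadingCoeff_X_sub_C, Finset.prod_const_one, mul_one]

lemma aeval_eq_zero_of_map_eq_C_mul_prod {K L ι : Type*} [Field K] [Field L] [Algebra K L]
    [Fintype ι] {P : K[X]} {a : K} {α : ι → L}
    (h : P.map (algebraMap K L) = C (algebraMap K L a) * ∏ j, (X - C (α j))) (j : ι) :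
    aeval (α j) P = 0 := by
  rw [← eval_map_algebraMap, h, eval_mul, eval_prod, Finset.prod_eq_zero (Finset.mem_univ j),
    mul_zero]
  rw [eval_sub, eval_X, eval_C, sub_self]

/-- for a general basis `ω`, squarefree `F` of degree `n` and `G` of
degree `m < n`, and `0 ≤ k ≤ m`,
`S_k = (−1)^{(n−k)(n−k−1)/2} aₙ^{m−n} · det [B_{ω,k}; X_{ω,k}]` in `F̄[x]`. -/
theorem subresultant_as_single_determinant
    {K : Type*} [Field K] (n m k : ℕ) (hmn : m < n) (hkm : k ≤ m)
    (ω : ℕ → Polynomial K) (hω : IsGeneralBasis n ω)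
    (a b : ℕ → K) (P Q : Polynomial K)
    (hP : P = ∑ i ∈ Finset.range (n + 1), Polynomial.C (a i) * ω i)
    (hQ : Q = ∑ i ∈ Finset.range (m + 1), Polynomial.C (b i) * ω i)
    (han : a n ≠ 0) (hbm : b m ≠ 0)
    (hdegP : P.natDegree = n) (hdegQ : Q.natDegree = m)
    (α : Fin n → AlgebraicClosure K)
    (hfact : P.map (algebraMap K (AlgebraicClosure K)) =
      Polynomial.C (algebraMap K (AlgebraicClosure K) (a n)) *
        ∏ j : Fin n, (Polynomial.X - Polynomial.C (α j)))
    (hdist : Function.Injective α)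
    (B : Matrix (Fin n) (Fin n) K) (hB : BezoutRelation n ω P Q B) :
    subresPoly n m k (a n) α Q =
      Polynomial.C ((-1 : AlgebraicClosure K) ^ ((n - k) * (n - k - 1) / 2) *
          algebraMap K (AlgebraicClosure K) (a n) ^ ((m : ℤ) - (n : ℤ))) *
        ((stackMat (topRows n k B) (Xmat n k ω)).det).map
          (algebraMap K (AlgebraicClosure K)) := by
  simpa only [hdegQ, leadingCoeff_eq_of_map_eq_C_mul_prod hfact] using
    subresultant_as_single_determinant_general (hkm.trans_lt hmn) hω hdegP (hdegQ ▸ hkm)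
      (aeval_eq_zero_of_map_eq_C_mul_prod hfact) hdist hB
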